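/- Let n ≥ 2, 1/2 < s < 1, and let L, C, η₀ > 0. Let u : ℝⁿ → ℝ be Lipschitz with constant L and semiconcave with constant C, and suppose u satisfies the ellipticity bound η₀ at a point x ∈ ℝⁿ. Let ε₁, …, εₙ > 0 with ∏_{j=1}^n εⱼ = 1. Then (1−s)·(1/2)·∫_{ℝⁿ} δ(u,x,y)/(∑_{j=1}^n εⱼ² yⱼ²)^{(n+2s)/2} dy ≥ (μ₀·ω_n/(2n))·∑_{j=1}^n εⱼ^{−2s}. -/

import Mathlib

open MeasureTheory

noncomputable def surfOmega (k : ℕ) : ℝ := 2 * Real.pi ^ ((k : ℝ) / 2) / Real.Gamma ((k : ℝ) / 2)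

noncomputable def mu1 (s L C : ℝ) : ℝ := L ^ (2 - 2 * s) * (C / 2) ^ (2 * s - 1) / (2 * s - 1)

noncomputable def C1 (n : ℕ) (s L C : ℝ) : ℝ :=
  (Real.sqrt Real.pi * Real.Gamma (((n : ℝ) - 1) / 2 + s) / Real.Gamma ((n : ℝ) / 2 + s)) *
    (mu1 s L C * surfOmega (n - 1) / 2)

noncomputable def C2 (n : ℕ) (s : ℝ) : ℝ :=
  surfOmega (n - 1) * Real.Gamma (((n : ℝ) - 1) / 2) * Real.Gamma (s + 1 / 2) /
    (2 * Real.Gamma ((n : ℝ) / 2 + s))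

noncomputable def mu0 (n : ℕ) (s L C η₀ : ℝ) : ℝ :=
  C1 n s L C ^ (1 - (n : ℝ)) * (C2 n s)⁻¹ * (η₀ / 2) ^ (n : ℝ)

/-- Second-order increment `δ(u,x,y) = u(x+y) + u(x-y) - 2u(x)`. -/
noncomputable def delta2 {n : ℕ} (u : EuclideanSpace ℝ (Fin n) → ℝ)
    (x y : EuclideanSpace ℝ (Fin n)) : ℝ :=
  u (x + y) + u (x - y) - 2 * u x

/-- Integrand `δ(u,x,y)/|A⁻¹ y|^(n+2s)`. -/
noncomputable def kernelA {n : ℕ} (s : ℝ) (A : Matrix (Fin n) (Fin n) ℝ)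
    (u : EuclideanSpace ℝ (Fin n) → ℝ) (x y : EuclideanSpace ℝ (Fin n)) : ℝ :=
  delta2 u x y /
    ‖(EuclideanSpace.equiv (Fin n) ℝ).symm (A⁻¹.mulVec (EuclideanSpace.equiv (Fin n) ℝ y))‖ ^
      ((n : ℝ) + 2 * s)

/-- The linear operator `L_A u(x) = (1/2) ∫ δ(u,x,y)/|A⁻¹ y|^(n+2s) dy`. -/
noncomputable def LA {n : ℕ} (s : ℝ) (A : Matrix (Fin n) (Fin n) ℝ)
    (u : EuclideanSpace ℝ (Fin n) → ℝ) (x : EuclideanSpace ℝ (Fin n)) : ℝ :=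
  (1 / 2) * ∫ y, kernelA s A u x y



lemma gaussKernel {V : Type*} [NormedAddCommGroup V] [InnerProductSpace ℝ V]
    [FiniteDimensional ℝ V] [MeasurableSpace V] [BorelSpace V]
    (α β p : ℝ) (hα : 0 < α) (hβ : 0 < β) (hp : (Module.finrank ℝ V : ℝ) / 2 < p) :
    Integrable (fun z : V => (α + β * ‖z‖ ^ 2) ^ (-p)) ∧
    ∫ z : V, (α + β * ‖z‖ ^ 2) ^ (-p) =
      (Real.pi / β) ^ ((Module.finrank ℝ V : ℝ) / 2) * α ^ ((Module.finrank ℝ V : ℝ) / 2 - p) *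
        Real.Gamma (p - (Module.finrank ℝ V : ℝ) / 2) / Real.Gamma p := by
  set d : ℝ := (Module.finrank ℝ V : ℝ) / 2 with hd
  have hd0 : 0 ≤ d := by positivity
  have hp0 : 0 < p := by linarith
  have hΓ := Real.Gamma_pos_of_pos hp0
  let F : V × ℝ → ℝ := fun q => q.2 ^ (p - 1) * Real.exp (-((α + β * ‖q.1‖ ^ 2) * q.2))
  have hFm : Measurable F := by fun_prop
  have hG : ∀ τ : ℝ, 0 < τ → Integrable (fun z : V => F (z, τ)) ∧
      ∫ z : V, F (z, τ) = (Real.pi / β) ^ d * (τ ^ (p - d - 1) * Real.exp (-(α * τ))) := by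
    intro τ hτ
    have h1 := GaussianFourier.integral_rexp_neg_mul_sq_norm (V := V) (b := β * τ) (by positivity)
    have h2 : Integrable (fun z : V => Real.exp (-(β * τ) * ‖z‖ ^ 2)) := by
      apply Integrable.of_integral_ne_zero
      rw [h1]; positivity
    have e : (fun z : V => F (z, τ)) = fun z => (τ ^ (p - 1) * Real.exp (-(α * τ))) *
        Real.exp (-(β * τ) * ‖z‖ ^ 2) := by
      funext z
      simp only [F]
      rw [mul_assoc, ← Real.exp_add]; congr 2; ring
    rw [e]
    refine ⟨h2.const_mul _, ?_⟩
    rw [integral_const_mul, h1, ← hd, Real.div_rpow Real.pi_pos.le (by positivity),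
      Real.mul_rpow hβ.le hτ.le, Real.div_rpow Real.pi_pos.le (by positivity),
      show p - d - 1 = p - 1 - d by ring, Real.rpow_sub hτ (p-1)]
    field_simp
  have hT : ∀ z : V, ∫ τ in Set.Ioi (0:ℝ), F (z, τ) = Real.Gamma p * (α + β * ‖z‖ ^ 2) ^ (-p) := by
    intro z
    have hr : 0 < α + β * ‖z‖ ^ 2 := by positivity
    simp only [F]
    rw [Real.integral_rpow_mul_exp_neg_mul_Ioi hp0 hr, one_div, Real.inv_rpow hr.le,
      Real.rpow_neg hr.le, mul_comm]
  have hI1 := Real.integral_rpow_mul_exp_neg_mul_Ioi (a := p - d) (r := α) (by linarith) hα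
  have hI2 : IntegrableOn (fun τ : ℝ => (Real.pi / β) ^ d * (τ ^ (p - d - 1) * Real.exp (-(α * τ))))
      (Set.Ioi 0) := by
    apply Integrable.const_mul
    apply Integrable.of_integral_ne_zero
    rw [hI1]
    have := Real.Gamma_pos_of_pos (show 0 < p - d by linarith)
    positivity
  have hint : Integrable F ((volume : Measure V).prod (volume.restrict (Set.Ioi (0:ℝ)))) := by
    rw [integrable_prod_iff' hFm.aestronglyMeasurable]
    constructor
    · filter_upwards [ae_restrict_mem measurableSet_Ioi] with τ hτ using (hG τ hτ).1
    · refine hI2.congr ?_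
      filter_upwards [ae_restrict_mem measurableSet_Ioi] with τ hτ
      rw [← (hG τ hτ).2]
      congr 1; funext z
      rw [Real.norm_of_nonneg]
      have : (0:ℝ) < τ := hτ
      positivity
  have hl := hint.integral_prod_left
  simp only [hT] at hl
  have hl2 := hl.const_mul (Real.Gamma p)⁻¹
  have e1 : (fun z : V => (Real.Gamma p)⁻¹ * (Real.Gamma p * (α + β * ‖z‖ ^ 2) ^ (-p))) =
      fun z : V => (α + β * ‖z‖ ^ 2) ^ (-p) := by
    funext z; field_simp
  rw [e1] at hl2
  refine ⟨hl2, ?_⟩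
  have hsw := integral_integral_swap (f := fun z τ => F (z, τ)) hint
  simp only [hT] at hsw
  rw [integral_const_mul, setIntegral_congr_fun measurableSet_Ioi (fun τ hτ => (hG τ hτ).2),
    integral_const_mul, hI1, one_div, Real.inv_rpow hα.le, ← Real.rpow_neg hα.le] at hsw
  rw [eq_div_iff hΓ.ne', mul_comm, hsw, show -(p-d) = d - p by ring]
  ring

lemma surfOmega_ball (m : ℕ) (hm : 1 ≤ m) :
    (m : ℝ) * (volume : Measure (EuclideanSpace ℝ (Fin m))).real (Metric.ball 0 1) =
      2 * Real.pi ^ ((m : ℝ) / 2) / Real.Gamma ((m : ℝ) / 2) := by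
  have : Nonempty (Fin m) := ⟨⟨0, hm⟩⟩
  have hm' : (0:ℝ) < m := by exact_mod_cast hm
  have hΓ := Real.Gamma_pos_of_pos (show (0:ℝ) < m/2 by positivity)
  rw [Measure.real, EuclideanSpace.volume_ball]
  simp only [ENNReal.ofReal_one, one_pow, one_mul, Fintype.card_fin]
  rw [Real.Gamma_add_one (by positivity), ENNReal.toReal_ofReal (by positivity),
    Real.sqrt_eq_rpow, ← Real.rpow_mul_natCast Real.pi_pos.le]
  rw [show (1/2:ℝ) * m = m / 2 by ring]
  field_simp

/-- polar coordinates -/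
lemma polarInt {E : Type*} [NormedAddCommGroup E] [InnerProductSpace ℝ E] [FiniteDimensional ℝ E]
    [MeasurableSpace E] [BorelSpace E] [Nontrivial E] {n : ℕ} (hdim : Module.finrank ℝ E = n)
    (f : E → ℝ) (hf : Integrable f) :
    (∀ᵐ σ : Metric.sphere (0 : E) 1 ∂(volume : Measure E).toSphere,
      IntegrableOn (fun r : ℝ => r ^ (n - 1) * f (r • (σ : E))) (Set.Ioi 0)) ∧
    Integrable (fun σ : Metric.sphere (0 : E) 1 =>
      ∫ r in Set.Ioi (0:ℝ), r ^ (n - 1) * f (r • (σ : E))) (volume : Measure E).toSphere ∧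
    ∫ y, f y = ∫ σ : Metric.sphere (0 : E) 1,
      (∫ r in Set.Ioi (0:ℝ), r ^ (n - 1) * f (r • (σ : E))) ∂(volume : Measure E).toSphere := by
  have hmp := (volume : Measure E).measurePreserving_homeomorphUnitSphereProd
  have hme : MeasurableEmbedding (homeomorphUnitSphereProd E) := Homeomorph.measurableEmbedding _
  rw [hdim] at hmp
  let g : Metric.sphere (0:E) 1 × Set.Ioi (0:ℝ) → ℝ := fun q => f (q.2.1 • q.1.1)
  have hg : ∀ y : ({0}ᶜ : Set E), g (homeomorphUnitSphereProd E y) = f y := by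
    rintro ⟨y, hy⟩
    have hy' : y ≠ 0 := hy
    have : ‖y‖ ≠ 0 := norm_ne_zero_iff.2 hy'
    simp [g, smul_smul, this]
  have hgi : Integrable g ((volume : Measure E).toSphere.prod (.volumeIoiPow (n - 1))) := by
    rw [← hmp.integrable_comp_emb hme]
    have : g ∘ (homeomorphUnitSphereProd E) = f ∘ Subtype.val := by
      funext y; exact hg y
    rw [this, ← integrableOn_iff_comap_subtypeVal (measurableSet_singleton _).compl]
    exact hf.integrableOn
  have hpow : ∀ h : ℝ → ℝ, (Integrable (fun r : Set.Ioi (0:ℝ) => h r) (.volumeIoiPow (n - 1)) ↔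
      IntegrableOn (fun r : ℝ => r ^ (n - 1) * h r) (Set.Ioi 0)) := by
    intro h
    rw [integrableOn_iff_comap_subtypeVal measurableSet_Ioi, Measure.volumeIoiPow,
      integrable_withDensity_iff_integrable_smul' (by fun_prop) (by simp)]
    apply integrable_congr
    refine .of_forall ?_
    rintro ⟨x, hx : 0 < x⟩
    simp (disch := positivity) [ENNReal.toReal_ofReal]
  have hpow2 : ∀ h : ℝ → ℝ, ∫ r : Set.Ioi (0:ℝ), h r ∂(.volumeIoiPow (n - 1)) =
      ∫ r in Set.Ioi (0:ℝ), r ^ (n - 1) * h r := by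
    intro h
    simp only [Measure.volumeIoiPow, ENNReal.ofReal]
    rw [integral_withDensity_eq_integral_smul,
        integral_subtype_comap measurableSet_Ioi fun a ↦ Real.toNNReal (a ^ (n - 1)) • h a,
        setIntegral_congr_fun measurableSet_Ioi fun x hx ↦ ?_]
    · rw [NNReal.smul_def, Real.coe_toNNReal _ (pow_nonneg hx.out.le _), smul_eq_mul]
    · exact (measurable_subtype_coe.pow_const _).real_toNNReal
  refine ⟨?_, ?_, ?_⟩
  · filter_upwards [hgi.prod_right_ae] with σ hσ
    exact (hpow (fun r => f (r • σ.1))).1 hσ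
  · have := hgi.integral_prod_left
    refine this.congr (.of_forall fun σ => ?_)
    exact hpow2 (fun r => f (r • σ.1))
  · calc ∫ y, f y = ∫ y : ({0}ᶜ : Set E), f y.1 ∂((volume : Measure E).comap (↑)) := by
          rw [integral_subtype_comap (measurableSet_singleton _).compl fun x ↦ f x,
            restrict_compl_singleton]
      _ = ∫ q, g q ∂((volume : Measure E).toSphere.prod (.volumeIoiPow (n - 1))) := by
          rw [← hmp.integral_comp hme]
          simp only [hg]
      _ = _ := by
          rw [integral_prod _ hgi]
          congr 1; funext σ
          exact hpow2 (fun r => f (r • σ.1))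

lemma diagMP {n : ℕ} (ε : Fin n → ℝ) (hε : ∀ j, 0 < ε j) (hprod : ∏ j, ε j = 1) :
    ∃ T : EuclideanSpace ℝ (Fin n) ≃L[ℝ] EuclideanSpace ℝ (Fin n),
      (∀ y j, T y j = ε j * y j) ∧ MeasurePreserving T volume volume := by
  let f : EuclideanSpace ℝ (Fin n) →ₗ[ℝ] EuclideanSpace ℝ (Fin n) :=
    { toFun := fun y => WithLp.toLp 2 (fun j => ε j * y j)
      map_add' := by intro a b; ext j; simp [mul_add]
      map_smul' := by intro a b; ext j; simp; ring }
  let g : EuclideanSpace ℝ (Fin n) →ₗ[ℝ] EuclideanSpace ℝ (Fin n) :=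
    { toFun := fun y => WithLp.toLp 2 (fun j => (ε j)⁻¹ * y j)
      map_add' := by intro a b; ext j; simp [mul_add]
      map_smul' := by intro a b; ext j; simp; ring }
  have hfg : ∀ y, f (g y) = y := by
    intro y; ext j; have := (hε j).ne'; simp [f, g, this]
  have hgf : ∀ y, g (f y) = y := by
    intro y; ext j; have := (hε j).ne'; simp [f, g, this]
  let T0 : EuclideanSpace ℝ (Fin n) ≃ₗ[ℝ] EuclideanSpace ℝ (Fin n) :=
    LinearEquiv.ofLinearMap f g (by ext1 y; exact hfg y) (by ext1 y; exact hgf y)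
  have hdet : LinearMap.det f = 1 := by
    have hM : f = Matrix.toLin (EuclideanSpace.basisFun (Fin n) ℝ).toBasis
        (EuclideanSpace.basisFun (Fin n) ℝ).toBasis (Matrix.diagonal ε) := by
      apply (EuclideanSpace.basisFun (Fin n) ℝ).toBasis.ext
      intro i
      rw [Matrix.toLin_self]
      ext j
      simp [f, Matrix.diagonal_apply, PiLp.single_apply]
      split_ifs with hij <;> simp_all
    rw [hM, LinearMap.det_toLin, Matrix.det_diagonal, hprod]
  refine ⟨T0.toContinuousLinearEquiv, fun y j => rfl, ?_⟩
  refine ⟨T0.toContinuousLinearEquiv.continuous.measurable, ?_⟩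
  have := Measure.map_linearMap_addHaar_eq_smul_addHaar
    (volume : Measure (EuclideanSpace ℝ (Fin n))) (f := f) (by rw [hdet]; norm_num)
  rw [hdet] at this
  simp only [inv_one, abs_one, ENNReal.ofReal_one, one_smul] at this
  exact this

lemma ballPow {n : ℕ} (hn : 1 ≤ n) (s : ℝ) (hs : 0 < s) :
    ∫ z in Metric.closedBall (0 : EuclideanSpace ℝ (Fin n)) 1, (‖z‖ ^ 2) ^ s =
      2 * Real.pi ^ ((n : ℝ) / 2) / Real.Gamma ((n : ℝ) / 2) / (n + 2 * s) := by
  have : Nonempty (Fin n) := ⟨⟨0, hn⟩⟩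
  have e : ∀ z : EuclideanSpace ℝ (Fin n),
      (Metric.closedBall (0 : EuclideanSpace ℝ (Fin n)) 1).indicator (fun z => (‖z‖ ^ 2) ^ s) z =
      (fun r : ℝ => (Set.Iic (1:ℝ)).indicator (fun r => (r ^ 2) ^ s) r) ‖z‖ := by
    intro z
    simp [Set.indicator]
  rw [← integral_indicator measurableSet_closedBall]
  simp only [e]
  rw [integral_fun_norm_addHaar]
  have e2 : ∀ r ∈ Set.Ioi (0:ℝ), r ^ (Module.finrank ℝ (EuclideanSpace ℝ (Fin n)) - 1) •
      (Set.Iic (1:ℝ)).indicator (fun r => (r ^ 2) ^ s) r =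
      (Set.Iic (1:ℝ)).indicator (fun r => r ^ ((n:ℝ) - 1 + 2 * s)) r := by
    intro r hr
    have hr' : 0 < r := hr
    by_cases h : r ≤ 1
    · simp only [Set.mem_Iic, h, Set.indicator_of_mem, finrank_euclideanSpace, Fintype.card_fin,
        smul_eq_mul]
      rw [Real.rpow_add hr', ← Real.rpow_natCast, ← Real.rpow_natCast, ← Real.rpow_mul hr'.le,
        Nat.cast_sub hn]
      norm_num
    · simp [h]
  rw [setIntegral_congr_fun measurableSet_Ioi e2, setIntegral_indicator measurableSet_Iic,
    Set.Ioi_inter_Iic, ← intervalIntegral.integral_of_le zero_le_one, integral_rpow]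
  · have := surfOmega_ball n hn
    simp only [finrank_euclideanSpace, Fintype.card_fin, nsmul_eq_mul, smul_eq_mul]
    rw [← mul_assoc, this, Real.one_rpow, Real.zero_rpow]
    · rw [show (n:ℝ) - 1 + 2 * s + 1 = n + 2 * s by ring]; ring
    · have : (0:ℝ) ≤ n := by positivity
      linarith
  · left
    have : (0:ℝ) ≤ n := by positivity
    linarith

lemma sphereLower {n : ℕ} (hn : 1 ≤ n) (s : ℝ) (hs : 0 < s) (hs1 : s < 1)
    (ε : Fin n → ℝ) (hε : ∀ j, 0 < ε j) (hprod : ∏ j, ε j = 1) :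
    2 * Real.pi ^ ((n : ℝ) / 2) / Real.Gamma ((n : ℝ) / 2) / n * ∑ j, ε j ^ (-(2 * s)) ≤
    ∫ σ : Metric.sphere (0 : EuclideanSpace ℝ (Fin n)) 1,
      (∑ j, ε j ^ 2 * σ.1 j ^ 2) ^ (-(((n : ℝ) + 2 * s) / 2))
        ∂(volume : Measure (EuclideanSpace ℝ (Fin n))).toSphere := by
  have : Nonempty (Fin n) := ⟨⟨0, hn⟩⟩
  have hn' : (0:ℝ) < n := by exact_mod_cast hn
  obtain ⟨T, hT, hTm⟩ := diagMP ε hε hprod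
  have hTe : MeasurableEmbedding T := T.toHomeomorph.measurableEmbedding
  have hTn : ∀ y, ‖T y‖ ^ 2 = ∑ j, ε j ^ 2 * y j ^ 2 := by
    intro y; rw [EuclideanSpace.norm_sq_eq]
    simp [hT, mul_pow]
  have hTs : ∀ y, ‖T.symm y‖ ^ 2 = ∑ j, (ε j)⁻¹ ^ 2 * y j ^ 2 := by
    intro y; rw [EuclideanSpace.norm_sq_eq]
    refine Finset.sum_congr rfl fun j _ => ?_
    have h1 := hT (T.symm y) j
    have := (hε j).ne'
    rw [ContinuousLinearEquiv.apply_symm_apply] at h1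
    rw [h1]; simp; field_simp
  -- the function on the z side
  let B := Metric.closedBall (0 : EuclideanSpace ℝ (Fin n)) 1
  have hc : ∀ (w : EuclideanSpace ℝ (Fin n) → ℝ), Continuous w → IntegrableOn w B := fun w hw =>
    hw.continuousOn.integrableOn_compact (isCompact_closedBall _ _)
  let h : EuclideanSpace ℝ (Fin n) → ℝ := B.indicator (fun z => (‖T.symm z‖ ^ 2) ^ s)
  have hhi : Integrable h := by
    rw [integrable_indicator_iff measurableSet_closedBall]
    apply hc
    have := T.symm.continuous
    exact Continuous.rpow_const (by fun_prop) (fun _ => Or.inr hs.le)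
  have hhT : Integrable (h ∘ T) := (hTm.integrable_comp_emb hTe).2 hhi
  have hval : ∫ y, (h ∘ T) y = ∫ z, h z := hTm.integral_comp hTe h
  obtain ⟨-, -, hpol⟩ := polarInt (n := n) (by simp) (h ∘ T) hhT
  have hray : ∀ σ : Metric.sphere (0 : EuclideanSpace ℝ (Fin n)) 1,
      ∫ r in Set.Ioi (0:ℝ), r ^ (n - 1) * (h ∘ T) (r • (σ : EuclideanSpace ℝ (Fin n))) =
      (∑ j, ε j ^ 2 * σ.1 j ^ 2) ^ (-(((n : ℝ) + 2 * s) / 2)) / (n + 2 * s) := by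
    intro σ
    have hσ : ‖σ.1‖ = 1 := by simpa using σ.2
    have hσ0 : σ.1 ≠ 0 := by rw [← norm_ne_zero_iff, hσ]; norm_num
    have ht : 0 < ‖T σ.1‖ := norm_pos_iff.2 (by simp [hσ0])
    rw [← hTn]
    set t := ‖T σ.1‖ with htdef
    have e2 : ∀ r ∈ Set.Ioi (0:ℝ), r ^ (n - 1) *
        (h ∘ T) (r • (σ : EuclideanSpace ℝ (Fin n))) =
        (Set.Iic (t⁻¹)).indicator (fun r => r ^ ((n:ℝ) - 1 + 2 * s)) r := by
      intro r hr
      have hr' : 0 < r := hr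
      have hmem : T (r • σ.1) ∈ B ↔ r ≤ t⁻¹ := by
        simp only [B, mem_closedBall_zero_iff, map_smul, norm_smul, ← htdef, Real.norm_eq_abs,
          abs_of_pos hr']
        rw [inv_eq_one_div, le_div_iff₀ ht]
      by_cases hle : r ≤ t⁻¹
      · simp only [Function.comp, h]
        rw [Set.indicator_of_mem (hmem.2 hle), Set.indicator_of_mem (by simpa using hle)]
        simp only [ContinuousLinearEquiv.symm_apply_apply, norm_smul, hσ, mul_one,
          Real.norm_eq_abs, sq_abs]
        rw [Real.rpow_add hr', ← Real.rpow_natCast, ← Real.rpow_natCast, ← Real.rpow_mul hr'.le,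
          Nat.cast_sub hn]
        norm_num
      · simp only [Function.comp, h]
        rw [Set.indicator_of_notMem (fun hh => hle (hmem.1 hh)),
          Set.indicator_of_notMem (by simpa using hle), mul_zero]
    rw [setIntegral_congr_fun measurableSet_Ioi e2, setIntegral_indicator measurableSet_Iic,
      Set.Ioi_inter_Iic, ← intervalIntegral.integral_of_le (by positivity), integral_rpow,
      Real.zero_rpow]
    · rw [show (n:ℝ) - 1 + 2 * s + 1 = n + 2 * s by ring, ← Real.rpow_natCast,
        ← Real.rpow_mul ht.le, Real.inv_rpow ht.le, ← Real.rpow_neg ht.le]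
      congr 2
      · rw [sub_zero]
        congr 1
        push_cast; ring
    · linarith
    · left; linarith
  simp only [hray] at hpol
  rw [integral_div, hval] at hpol
  have hns : 0 < (n:ℝ) + 2 * s := by positivity
  rw [eq_div_iff hns.ne'] at hpol
  rw [← hpol]
  -- lower bound of ∫ h
  let k : Fin n → EuclideanSpace ℝ (Fin n) → ℝ := fun j z => z j ^ 2 * (‖z‖ ^ 2) ^ (s - 1)
  have hk0 : ∀ j z, 0 ≤ k j z := fun j z => by positivity
  have hksum : ∀ z, ∑ j, k j z = (‖z‖ ^ 2) ^ s := by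
    intro z
    simp only [k]
    rw [← Finset.sum_mul]
    have : ∑ j, z j ^ 2 = ‖z‖ ^ 2 := by rw [EuclideanSpace.norm_sq_eq]; simp
    rw [this]
    rcases eq_or_ne z 0 with rfl | hz
    · simp [hs.ne']
    · have : 0 < ‖z‖ ^ 2 := by positivity
      rw [Real.rpow_sub_one this.ne']; field_simp
  have hki : ∀ j, IntegrableOn (k j) B := by
    intro j
    refine Integrable.mono' (hc (fun z => (‖z‖ ^ 2) ^ s)
      (Continuous.rpow_const (by fun_prop) (fun _ => Or.inr hs.le))) ?_ ?_
    · apply Measurable.aestronglyMeasurable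
      simp only [k]; fun_prop
    · refine .of_forall fun z => ?_
      rw [Real.norm_of_nonneg (hk0 j z), ← hksum]
      exact Finset.single_le_sum (f := fun j => k j z) (fun i _ => hk0 i z) (Finset.mem_univ j)
  have hksame : ∀ i j, ∫ z in B, k i z = ∫ z in B, k j z := by
    intro i j
    let e := LinearIsometryEquiv.piLpCongrLeft 2 ℝ ℝ (Equiv.swap i j)
    have he := e.measurePreserving
    have hee : MeasurableEmbedding e := e.toHomeomorph.measurableEmbedding
    rw [← he.setIntegral_preimage_emb hee]
    have hB : e ⁻¹' B = B := by ext z; simp [B]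
    rw [hB]
    congr 1; funext z
    simp only [k, LinearIsometryEquiv.norm_map]
    congr 2
    simp [e, LinearIsometryEquiv.piLpCongrLeft_apply, Equiv.piCongrLeft'_apply]
  have hkval : ∀ j, ∫ z in B, k j z =
      2 * Real.pi ^ ((n : ℝ) / 2) / Real.Gamma ((n : ℝ) / 2) / (n + 2 * s) / n := by
    intro j
    rw [← ballPow hn s hs]
    simp only [← hksum]
    rw [integral_finsetSum _ (fun j _ => hki j), Finset.sum_congr rfl (fun i _ => hksame i j)]
    simp [B]
    field_simp
  have hpt : ∀ z, ∑ j, ε j ^ (-(2 * s)) * k j z ≤ (‖T.symm z‖ ^ 2) ^ s := by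
    intro z
    rcases eq_or_ne z 0 with rfl | hz
    · simp [k, hs.ne']
    have hz2 : 0 < ‖z‖ ^ 2 := by positivity
    have hsum : ∑ j, z j ^ 2 = ‖z‖ ^ 2 := by rw [EuclideanSpace.norm_sq_eq]; simp
    have := (Real.concaveOn_rpow hs.le hs1.le).le_map_sum (t := Finset.univ)
      (w := fun j => z j ^ 2 / ‖z‖ ^ 2) (p := fun j => (ε j)⁻¹ ^ 2)
      (fun i _ => by positivity) (by rw [← Finset.sum_div, hsum, div_self hz2.ne'])
      (fun i _ => by simp; positivity)
    simp only [smul_eq_mul] at this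
    have e3 : ∑ j, z j ^ 2 / ‖z‖ ^ 2 * (ε j)⁻¹ ^ 2 = ‖T.symm z‖ ^ 2 / ‖z‖ ^ 2 := by
      rw [hTs, Finset.sum_div]; refine Finset.sum_congr rfl fun j _ => by ring
    rw [e3, Real.div_rpow (by positivity) hz2.le, le_div_iff₀ (by positivity)] at this
    refine le_trans (le_of_eq ?_) this
    rw [Finset.sum_mul]
    refine Finset.sum_congr rfl fun j _ => ?_
    simp only [k]
    rw [Real.rpow_sub_one hz2.ne', ← Real.rpow_natCast (ε j)⁻¹, Real.inv_rpow (hε j).le,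
      Real.inv_rpow (by have := hε j; positivity), ← Real.rpow_mul (hε j).le, Real.rpow_neg (hε j).le]
    push_cast
    ring
  have hlow : ∑ j, ε j ^ (-(2 * s)) * ∫ z in B, k j z ≤ ∫ z, h z := by
    simp only [h]
    rw [integral_indicator measurableSet_closedBall]
    simp only [← integral_const_mul]
    rw [← integral_finsetSum _ (fun j _ => (hki j).const_mul _)]
    refine integral_mono (integrable_finsetSum _ (fun j _ => (hki j).const_mul _)) ?_ hpt
    exact (integrable_indicator_iff measurableSet_closedBall).1 hhi
  simp only [hkval] at hlow
  rw [← Finset.sum_mul] at hlow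
  have h5 := mul_le_mul_of_nonneg_right hlow hns.le
  refine le_trans (le_of_eq ?_) h5
  field_simp

lemma splitMP {m : ℕ} (e : EuclideanSpace ℝ (Fin (m + 1))) (he : ‖e‖ = 1) :
    ∃ W : EuclideanSpace ℝ (Fin m) →ₗ[ℝ] EuclideanSpace ℝ (Fin (m + 1)),
      (∀ z, ‖W z‖ = ‖z‖) ∧ (∀ z, inner ℝ e (W z) = 0) ∧
      MeasurePreserving (fun p : ℝ × EuclideanSpace ℝ (Fin m) => p.1 • e + W p.2) volume volume ∧
      MeasurableEmbedding (fun p : ℝ × EuclideanSpace ℝ (Fin m) => p.1 • e + W p.2) := by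
  let X := WithLp 2 (ℝ × EuclideanSpace ℝ (Fin m))
  have hdim : Module.finrank ℝ X = Module.finrank ℝ (EuclideanSpace ℝ (Fin (m + 1))) := by
    rw [(WithLp.linearEquiv 2 ℝ (ℝ × EuclideanSpace ℝ (Fin m))).finrank_eq]
    simp; ring
  let J : X ≃ₗᵢ[ℝ] EuclideanSpace ℝ (Fin (m + 1)) :=
    (stdOrthonormalBasis ℝ X).equiv (stdOrthonormalBasis ℝ _) (finCongr hdim)
  let o : X := WithLp.toLp 2 ((1:ℝ), (0 : EuclideanSpace ℝ (Fin m)))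
  have ho : ‖J o‖ = ‖e‖ := by
    rw [J.norm_map, he, WithLp.prod_norm_eq_of_L2]; simp [o]
  let R := (ℝ ∙ (J o - e))ᗮ.reflection
  have hR : R (J o) = e := Submodule.reflection_sub ho
  let K : X ≃ₗᵢ[ℝ] EuclideanSpace ℝ (Fin (m + 1)) := J.trans R
  have hK : K o = e := hR
  let W : EuclideanSpace ℝ (Fin m) →ₗ[ℝ] EuclideanSpace ℝ (Fin (m + 1)) :=
    K.toLinearEquiv.toLinearMap ∘ₗ (WithLp.linearEquiv 2 ℝ (ℝ × EuclideanSpace ℝ (Fin m))).symm.toLinearMap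
      ∘ₗ LinearMap.inr ℝ ℝ (EuclideanSpace ℝ (Fin m))
  have hW : ∀ z, W z = K (WithLp.toLp 2 ((0:ℝ), z)) := fun z => rfl
  have hP : (fun p : ℝ × EuclideanSpace ℝ (Fin m) => p.1 • e + W p.2) =
      K ∘ (WithLp.toLp 2 : ℝ × EuclideanSpace ℝ (Fin m) → X) := by
    funext p
    rw [hW, ← hK, ← map_smul, ← map_add, Function.comp]
    congr 1
    apply (WithLp.equiv 2 _).injective
    change p.1 • ((1:ℝ), (0 : EuclideanSpace ℝ (Fin m))) + ((0:ℝ), p.2) = p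
    ext <;> simp
  refine ⟨W, ?_, ?_, ?_, ?_⟩
  · intro z
    rw [hW, K.norm_map, WithLp.prod_norm_eq_of_L2]; simp
  · intro z
    rw [hW, ← hK, K.inner_map_map, WithLp.prod_inner_apply]; simp [o]
  · rw [hP]
    exact K.measurePreserving.comp (WithLp.volume_preserving_toLp _ _)
  · rw [hP]
    refine K.toHomeomorph.measurableEmbedding.comp ?_
    exact (MeasurableEquiv.toLp 2 (ℝ × EuclideanSpace ℝ (Fin m))).measurableEmbedding

lemma matA {m : ℕ} (e : EuclideanSpace ℝ (Fin (m + 1))) (he : ‖e‖ = 1) (a b : ℝ) (ha : 0 < a)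
    (hb : 0 < b) (hab : a * b ^ m = 1) :
    ∃ A : Matrix (Fin (m + 1)) (Fin (m + 1)) ℝ, A.PosDef ∧ A.det = 1 ∧
      ∀ (t : ℝ) (w : EuclideanSpace ℝ (Fin (m + 1))), inner ℝ e w = 0 →
        ‖(EuclideanSpace.equiv (Fin (m + 1)) ℝ).symm
          (A⁻¹.mulVec (EuclideanSpace.equiv (Fin (m + 1)) ℝ (t • e + w)))‖ ^ 2 =
          a ^ 2 * t ^ 2 + b ^ 2 * ‖w‖ ^ 2 := by
  have hee : e.ofLp ⬝ᵥ e.ofLp = 1 := by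
    have : inner ℝ e e = (1:ℝ) := by rw [real_inner_self_eq_norm_sq, he]; norm_num
    rw [EuclideanSpace.inner_eq_star_dotProduct] at this
    simpa using this
  have hdot : ∀ w : EuclideanSpace ℝ (Fin (m + 1)), e.ofLp ⬝ᵥ w.ofLp = inner ℝ e w := by
    intro w
    rw [EuclideanSpace.inner_eq_star_dotProduct, dotProduct_comm]
    simp
  let E := Matrix.vecMulVec e.ofLp e.ofLp
  have hE2 : E * E = E := by
    simp only [E]
    rw [Matrix.vecMulVec_mul_vecMulVec, hee]; simp
  let A : Matrix (Fin (m + 1)) (Fin (m + 1)) ℝ := b⁻¹ • 1 + (a⁻¹ - b⁻¹) • E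
  let B : Matrix (Fin (m + 1)) (Fin (m + 1)) ℝ := b • 1 + (a - b) • E
  have hAB : A * B = 1 := by
    simp only [A, B, add_mul, mul_add, smul_mul_smul_comm, hE2, mul_one, one_mul]
    rw [inv_mul_cancel₀ hb.ne', one_smul, add_assoc, ← add_smul, ← add_smul]
    have : (a⁻¹ - b⁻¹) * b + (b⁻¹ * (a - b) + (a⁻¹ - b⁻¹) * (a - b)) = 0 := by
      field_simp; ring
    rw [this]; simp
  have hinv : A⁻¹ = B := Matrix.inv_eq_right_inv hAB
  refine ⟨A, ?_, ?_, ?_⟩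
  · apply Matrix.PosDef.of_dotProduct_mulVec_pos
    · ext i j
      simp [A, E, Matrix.vecMulVec_apply, Matrix.one_apply, eq_comm, mul_comm]
    · intro x hx
      have hxx : 0 < x ⬝ᵥ x := by
        have h1 : x ⬝ᵥ x ≠ 0 := fun h => hx (dotProduct_self_eq_zero.1 h)
        have h2 : 0 ≤ x ⬝ᵥ x := Finset.sum_nonneg fun i _ => mul_self_nonneg _
        exact lt_of_le_of_ne h2 h1.symm
      have hcs : (e.ofLp ⬝ᵥ x) ^ 2 ≤ x ⬝ᵥ x := by
        have := abs_real_inner_le_norm e (WithLp.toLp 2 x)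
        rw [he, one_mul, ← hdot] at this
        have h2 := sq_le_sq' (abs_le.1 this).1 (abs_le.1 this).2
        refine h2.trans (le_of_eq ?_)
        rw [EuclideanSpace.norm_sq_eq]; simp [dotProduct, sq]
      have e1 : star x ⬝ᵥ A.mulVec x = b⁻¹ * (x ⬝ᵥ x) + (a⁻¹ - b⁻¹) * (e.ofLp ⬝ᵥ x) ^ 2 := by
        simp only [A, E, Matrix.add_mulVec, Matrix.smul_mulVec, Matrix.one_mulVec,
          Matrix.vecMulVec_mulVec, dotProduct_add, dotProduct_smul, star_trivial, smul_eq_mul]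
        simp
        rw [dotProduct_comm x e.ofLp]; left; ring
      rw [e1]
      have hb' : 0 < b⁻¹ := by positivity
      have ha' : 0 < a⁻¹ := by positivity
      by_cases h0 : e.ofLp ⬝ᵥ x = 0
      · rw [h0]; simp; positivity
      · have : 0 < (e.ofLp ⬝ᵥ x) ^ 2 := by positivity
        nlinarith
  · have : A = b⁻¹ • (1 + Matrix.replicateCol Unit ((b * a⁻¹ - 1) • e.ofLp) * Matrix.replicateRow Unit e.ofLp) := by
      rw [← Matrix.vecMulVec_eq]
      simp only [A, E, smul_add, Matrix.smul_vecMulVec, smul_smul]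
      congr 2
      field_simp
    rw [this, Matrix.det_smul, Matrix.det_one_add_replicateCol_mul_replicateRow, dotProduct_smul,
      hee]
    simp only [Fintype.card_fin, smul_eq_mul, mul_one, inv_pow]
    have : b ^ m = a⁻¹ := by field_simp; linarith
    rw [pow_succ, this]; field_simp; ring
  · intro t w hw
    rw [hinv]
    have : (EuclideanSpace.equiv (Fin (m + 1)) ℝ).symm
          (B.mulVec (EuclideanSpace.equiv (Fin (m + 1)) ℝ (t • e + w))) = (a * t) • e + b • w := by
      apply (EuclideanSpace.equiv (Fin (m + 1)) ℝ).injective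
      rw [ContinuousLinearEquiv.apply_symm_apply]
      change B.mulVec (t • e.ofLp + w.ofLp) = (a * t) • e.ofLp + b • w.ofLp
      have h6 : e.ofLp ⬝ᵥ (t • e.ofLp + w.ofLp) = t := by
        rw [dotProduct_add, dotProduct_smul, hee, hdot, hw]; simp
      simp only [B, E, Matrix.add_mulVec, Matrix.smul_mulVec, Matrix.one_mulVec,
          Matrix.vecMulVec_mulVec, h6]
      ext i
      simp
      ring
    rw [this, norm_add_sq_real, norm_smul, norm_smul, he, inner_smul_left, inner_smul_right, hw]
    simp [mul_pow]

/-- Truncated quadratic modulus. -/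
noncomputable def modM (L C r : ℝ) : ℝ := if r ≤ 2 * L / C then C * r ^ 2 else 2 * L * r

lemma modM_int (s L C : ℝ) (hs : 1 / 2 < s) (hs1 : s < 1) (hL : 0 < L) (hC : 0 < C) :
    IntegrableOn (fun r : ℝ => modM L C r * r ^ (-1 - 2 * s)) (Set.Ioi 0) ∧
    (1 - s) * ∫ r in Set.Ioi (0:ℝ), modM L C r * r ^ (-1 - 2 * s) =
      L ^ (2 - 2 * s) * (C / 2) ^ (2 * s - 1) / (2 * s - 1) := by
  set R := 2 * L / C with hR
  have hR0 : 0 < R := by positivity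
  have hu : Set.Ioi (0:ℝ) = Set.Ioc 0 R ∪ Set.Ioi R := (Set.Ioc_union_Ioi_eq_Ioi hR0.le).symm
  have e1 : ∀ r ∈ Set.Ioc 0 R, modM L C r * r ^ (-1 - 2 * s) = C * r ^ (1 - 2 * s) := by
    intro r hr
    simp only [modM, ← hR, hr.2, if_true]
    rw [mul_assoc, ← Real.rpow_natCast, ← Real.rpow_add hr.1]; norm_num; left; congr 1; ring
  have e2 : ∀ r ∈ Set.Ioi R, modM L C r * r ^ (-1 - 2 * s) = (2 * L) * r ^ (-2 * s) := by
    intro r hr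
    have hr' : R < r := hr
    simp only [modM, ← hR, not_le.2 hr', if_false]
    rw [mul_assoc, ← Real.rpow_one_add' (hR0.trans hr').le (by linarith)]; congr 2; ring
  have i1 : IntegrableOn (fun r : ℝ => r ^ (1 - 2 * s)) (Set.Ioc 0 R) := by
    have := intervalIntegral.intervalIntegrable_rpow' (a := 0) (b := R) (r := 1 - 2 * s) (by linarith)
    exact (intervalIntegrable_iff_integrableOn_Ioc_of_le hR0.le).1 this
  have i2 : IntegrableOn (fun r : ℝ => r ^ (-2 * s)) (Set.Ioi R) :=
    integrableOn_Ioi_rpow_of_lt (by linarith) hR0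
  have j1 : IntegrableOn (fun r : ℝ => modM L C r * r ^ (-1 - 2 * s)) (Set.Ioc 0 R) :=
    (integrableOn_congr_fun e1 measurableSet_Ioc).2 (i1.const_mul _)
  have j2 : IntegrableOn (fun r : ℝ => modM L C r * r ^ (-1 - 2 * s)) (Set.Ioi R) :=
    (integrableOn_congr_fun e2 measurableSet_Ioi).2 (i2.const_mul _)
  refine ⟨by rw [hu]; exact j1.union j2, ?_⟩
  rw [hu, setIntegral_union (Set.Ioc_disjoint_Ioi le_rfl) measurableSet_Ioi j1 j2,
    setIntegral_congr_fun measurableSet_Ioc e1, setIntegral_congr_fun measurableSet_Ioi e2,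
    integral_const_mul, integral_const_mul, ← intervalIntegral.integral_of_le hR0.le,
    integral_rpow (by left; linarith), integral_Ioi_rpow_of_lt (by linarith) hR0,
    Real.zero_rpow (by linarith)]
  have hR1 : R ^ (1 - 2 * s + 1) = R * R ^ (1 - 2 * s) := by
    rw [Real.rpow_add hR0, Real.rpow_one]; ring
  rw [hR1, show -2 * s + 1 = 1 - 2 * s by ring]
  have hL2 : L ^ (2 - 2 * s) * (C / 2) ^ (2 * s - 1) = L * R ^ (1 - 2 * s) := by
    rw [show R = L / (C / 2) by rw [hR]; field_simp, Real.div_rpow hL.le (by positivity),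
      show 2 - 2 * s = 1 + (1 - 2 * s) by ring, Real.rpow_add hL, Real.rpow_one,
      show 2 * s - 1 = -(1 - 2 * s) by ring, Real.rpow_neg (by positivity)]
    field_simp
  rw [hL2]
  have h1 : 2 * s - 1 ≠ 0 := by linarith
  have h2 : 1 - 2 * s ≠ 0 := by linarith
  have h3 : 1 - 2 * s + 1 ≠ 0 := by linarith
  have h4 : C * R = 2 * L := by rw [hR]; field_simp
  generalize R ^ (1 - 2 * s) = Q
  rw [show (1 - 2 * s) = -(2 * s - 1) by ring, div_neg, neg_div, neg_neg]
  have : C * ((R * Q - 0) / (-(2 * s - 1) + 1)) = L * Q / (1 - s) := by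
    have h5 : 1 - s ≠ 0 := by linarith
    rw [show -(2 * s - 1) + 1 = 2 * (1 - s) by ring]
    field_simp
    linear_combination Q * h4
  rw [this]
  have h5 : 1 - s ≠ 0 := by linarith
  obtain ⟨D, hD⟩ : ∃ D, D = 2 * s - 1 := ⟨_, rfl⟩
  rw [← hD] at h1 ⊢
  field_simp
  rw [hD]
  ring

lemma int_abs (h : ℝ → ℝ) (hi : IntegrableOn h (Set.Ioi 0)) : Integrable (fun t : ℝ => h |t|) := by
  have h1 : IntegrableOn (fun t : ℝ => h |t|) (Set.Ioi 0) := by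
    refine (integrableOn_congr_fun ?_ measurableSet_Ioi).2 hi
    intro t ht
    simp only [abs_of_pos (show (0:ℝ) < t from ht)]
  have h2 : IntegrableOn (fun t : ℝ => h |t|) (Set.Iic 0) := by
    rw [← Measure.map_neg_eq_self (volume : Measure ℝ)]
    let m : MeasurableEmbedding fun t : ℝ => -t := (Homeomorph.neg ℝ).measurableEmbedding
    rw [m.integrableOn_map_iff]
    simp_rw [Function.comp_def, abs_neg, Set.neg_preimage, Set.neg_Iic, neg_zero]
    exact (integrableOn_Ici_iff_integrableOn_Ioi (by simp)).2 h1
  have := h2.union h1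
  rwa [Set.Iic_union_Ioi, integrableOn_univ] at this

lemma delta2_le_modM {n : ℕ} (L C : ℝ) (u : EuclideanSpace ℝ (Fin n) → ℝ)
    (hLip : ∀ a b : EuclideanSpace ℝ (Fin n), |u a - u b| ≤ L * ‖a - b‖)
    (hSC : ∀ a b : EuclideanSpace ℝ (Fin n), delta2 u a b ≤ C * ‖b‖ ^ 2)
    (a b : EuclideanSpace ℝ (Fin n)) : delta2 u a b ≤ modM L C ‖b‖ := by
  unfold modM
  split_ifs
  · exact hSC a b
  · have h1 := (abs_le.1 (hLip (a + b) a)).2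
    have h2 := (abs_le.1 (hLip (a - b) a)).2
    simp only [add_sub_cancel_left, sub_sub_cancel_left, norm_neg] at h1 h2
    unfold delta2; linarith

lemma modM_nonneg (L C : ℝ) (hL : 0 < L) (hC : 0 < C) (r : ℝ) (hr : 0 ≤ r) : 0 ≤ modM L C r := by
  unfold modM; split_ifs <;> positivity

lemma modM_meas (L C : ℝ) : Measurable (modM L C) := by
  unfold modM
  exact Measurable.ite measurableSet_Iic (by fun_prop) (by fun_prop)

lemma kernel_z (m : ℕ) (hm : 1 ≤ m) (s a b : ℝ) (hs : 0 < s) (ha : 0 < a) (hb : 0 < b)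
    (hab : a * b ^ m = 1) (t : ℝ) (ht : t ≠ 0) :
    Integrable (fun z : EuclideanSpace ℝ (Fin m) =>
      (a ^ 2 * t ^ 2 + b ^ 2 * ‖z‖ ^ 2) ^ (-((((m + 1 : ℕ) : ℝ) + 2 * s) / 2))) ∧
    ∫ z : EuclideanSpace ℝ (Fin m),
      (a ^ 2 * t ^ 2 + b ^ 2 * ‖z‖ ^ 2) ^ (-((((m + 1 : ℕ) : ℝ) + 2 * s) / 2)) =
      C2 (m + 1) s * a ^ (-(2 * s)) * |t| ^ (-1 - 2 * s) := by
  have hm0 : (0:ℝ) < m := by exact_mod_cast hm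
  have ht' : 0 < |t| := abs_pos.2 ht
  have hat : a ^ 2 * t ^ 2 = (a * |t|) ^ 2 := by rw [mul_pow, sq_abs]
  obtain ⟨h1, h2⟩ := gaussKernel (V := EuclideanSpace ℝ (Fin m)) (a ^ 2 * t ^ 2) (b ^ 2)
    ((((m + 1 : ℕ) : ℝ) + 2 * s) / 2) (by positivity) (by positivity)
    (by simp; linarith)
  refine ⟨h1, ?_⟩
  rw [h2]
  simp only [finrank_euclideanSpace, Fintype.card_fin]
  unfold C2 surfOmega
  have hΓ := Real.Gamma_pos_of_pos (show (0:ℝ) < m / 2 by positivity)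
  rw [hat, ← Real.rpow_natCast (a * |t|) 2, ← Real.rpow_mul (by positivity),
    Real.div_rpow Real.pi_pos.le (by positivity), ← Real.rpow_natCast b 2, ← Real.rpow_mul hb.le]
  have e1 : ((2:ℕ):ℝ) * ((m:ℝ) / 2 - (((m + 1 : ℕ):ℝ) + 2 * s) / 2) = -1 - 2 * s := by
    push_cast; ring
  have e2 : ((2:ℕ):ℝ) * ((m:ℝ) / 2) = (m : ℝ) := by push_cast; ring
  have e3 : (((m + 1 : ℕ):ℝ) + 2 * s) / 2 - (m:ℝ) / 2 = s + 1 / 2 := by push_cast; ring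
  have e4 : (((m + 1 : ℕ):ℝ) + 2 * s) / 2 = ((m + 1 : ℕ):ℝ) / 2 + s := by ring
  have e5 : (((m + 1 : ℕ):ℝ) - 1) / 2 = (m:ℝ) / 2 := by push_cast; ring
  rw [e1, e2, e3, e4, e5, Real.rpow_natCast, Real.mul_rpow ha.le ht'.le,
    show -1 - 2 * s = -(2 * s) - 1 by ring, Real.rpow_sub_one ha.ne']
  have e6 : b ^ m = a⁻¹ := by field_simp; linarith
  rw [e6, Nat.add_sub_cancel]
  field_simp

lemma kernel_t (m : ℕ) (hm : 1 ≤ m) (s a b : ℝ) (hs : 0 < s) (ha : 0 < a) (hb : 0 < b)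
    (hab : a * b ^ m = 1) (z : ℝ) (hz : 0 < z) :
    Integrable (fun t : ℝ =>
      (a ^ 2 * t ^ 2 + b ^ 2 * z ^ 2) ^ (-((((m + 1 : ℕ) : ℝ) + 2 * s) / 2))) ∧
    ∫ t : ℝ, (a ^ 2 * t ^ 2 + b ^ 2 * z ^ 2) ^ (-((((m + 1 : ℕ) : ℝ) + 2 * s) / 2)) =
      (Real.sqrt Real.pi * Real.Gamma ((((m + 1 : ℕ) : ℝ) - 1) / 2 + s) /
        Real.Gamma (((m + 1 : ℕ) : ℝ) / 2 + s)) * b ^ (-(2 * s)) * z ^ (-(m:ℝ) - 2 * s) := by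
  have hm0 : (0:ℝ) < m := by exact_mod_cast hm
  obtain ⟨h1, h2⟩ := gaussKernel (V := ℝ) (b ^ 2 * z ^ 2) (a ^ 2)
    ((((m + 1 : ℕ) : ℝ) + 2 * s) / 2) (by positivity) (by positivity)
    (by simp; linarith)
  have e0 : ∀ t : ℝ, b ^ 2 * z ^ 2 + a ^ 2 * ‖t‖ ^ 2 = a ^ 2 * t ^ 2 + b ^ 2 * z ^ 2 := by
    intro t; rw [Real.norm_eq_abs, sq_abs]; ring
  simp only [e0] at h1 h2
  refine ⟨h1, ?_⟩
  rw [h2]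
  simp only [Module.finrank_self, Nat.cast_one]
  rw [← mul_pow, ← Real.rpow_natCast (b * z) 2, ← Real.rpow_mul (by positivity),
    Real.div_rpow Real.pi_pos.le (by positivity), ← Real.sqrt_eq_rpow, ← Real.sqrt_eq_rpow,
    Real.sqrt_sq ha.le]
  have e1 : ((2:ℕ):ℝ) * ((1:ℝ) / 2 - (((m + 1 : ℕ):ℝ) + 2 * s) / 2) = -(m:ℝ) - 2 * s := by
    push_cast; ring
  have e3 : (((m + 1 : ℕ):ℝ) + 2 * s) / 2 - (1:ℝ) / 2 = (((m + 1 : ℕ) : ℝ) - 1) / 2 + s := by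
    push_cast; ring
  have e4 : (((m + 1 : ℕ):ℝ) + 2 * s) / 2 = ((m + 1 : ℕ):ℝ) / 2 + s := by ring
  rw [e1, e3, e4, Real.mul_rpow hb.le hz.le]
  have e5 : b ^ (-(m:ℝ) - 2 * s) = a * b ^ (-(2 * s)) := by
    rw [show -(m:ℝ) - 2 * s = -(m:ℝ) + -(2 * s) by ring, Real.rpow_add hb, Real.rpow_neg hb.le,
      Real.rpow_natCast]
    congr 1
    field_simp; linarith
  rw [e5]
  field_simp

lemma dirIneq (m : ℕ) (hm : 1 ≤ m) (s L C η₀ : ℝ)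
    (hs : 1 / 2 < s) (hs1 : s < 1) (hL : 0 < L) (hC : 0 < C)
    (u : EuclideanSpace ℝ (Fin (m + 1)) → ℝ)
    (hLip : ∀ a b : EuclideanSpace ℝ (Fin (m + 1)), |u a - u b| ≤ L * ‖a - b‖)
    (hSC : ∀ a b : EuclideanSpace ℝ (Fin (m + 1)), delta2 u a b ≤ C * ‖b‖ ^ 2)
    (hcont : Continuous u)
    (x : EuclideanSpace ℝ (Fin (m + 1)))
    (hEll : ∀ A : Matrix (Fin (m + 1)) (Fin (m + 1)) ℝ, A.PosDef → A.det = 1 →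
      Integrable (fun y => kernelA s A u x y) ∧ η₀ ≤ (1 - s) * LA s A u x)
    (e : EuclideanSpace ℝ (Fin (m + 1))) (he : ‖e‖ = 1)
    (hint : IntegrableOn (fun r : ℝ => delta2 u x (r • e) * r ^ (-1 - 2 * s)) (Set.Ioi 0))
    (a b : ℝ) (ha : 0 < a) (hb : 0 < b) (hab : a * b ^ m = 1) :
    η₀ ≤ C2 (m + 1) s * a ^ (-(2 * s)) *
        ((1 - s) * ∫ r in Set.Ioi (0:ℝ), delta2 u x (r • e) * r ^ (-1 - 2 * s)) +
      C1 (m + 1) s L C * b ^ (-(2 * s)) := by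
  have hs0 : 0 < s := by linarith
  have : Nonempty (Fin m) := ⟨⟨0, hm⟩⟩
  obtain ⟨A, hA1, hA2, hA3⟩ := matA e he a b ha hb hab
  obtain ⟨W, hWn, hWi, hPm, hPe⟩ := splitMP e he
  obtain ⟨hKi, hKη⟩ := hEll A hA1 hA2
  set p : ℝ := (((m + 1 : ℕ) : ℝ) + 2 * s) / 2 with hp
  have hWc : Continuous W := W.continuous_of_finiteDimensional
  let k : ℝ → EuclideanSpace ℝ (Fin m) → ℝ := fun t z => (a ^ 2 * t ^ 2 + b ^ 2 * ‖z‖ ^ 2) ^ (-p)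
  have hk0 : ∀ t z, 0 ≤ k t z := fun t z => by positivity
  have hkm : Measurable (fun q : ℝ × EuclideanSpace ℝ (Fin m) => k q.1 q.2) := by
    simp only [k]; fun_prop
  have hkneg : ∀ t z, k t (-z) = k t z := fun t z => by simp [k]
  let g : ℝ → ℝ := fun t => delta2 u x (t • e)
  have hgc : Continuous g := by simp only [g, delta2]; fun_prop
  have hgabs : ∀ t, g t = g |t| := by
    intro t
    rcases abs_choice t with h | h
    · rw [h]
    · rw [h]; simp only [g, delta2, neg_smul, sub_neg_eq_add]; rw [← sub_eq_add_neg]; ring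
  let f : ℝ × EuclideanSpace ℝ (Fin m) → ℝ := fun q => delta2 u x (q.1 • e + W q.2) * k q.1 q.2
  have hfK : ∀ q : ℝ × EuclideanSpace ℝ (Fin m), kernelA s A u x (q.1 • e + W q.2) = f q := by
    intro q
    have h1 := hA3 q.1 (W q.2) (hWi q.2)
    rw [hWn] at h1
    simp only [f, k, kernelA]
    rw [← h1, div_eq_mul_inv, ← Real.rpow_natCast, ← Real.rpow_mul (norm_nonneg _),
      ← Real.rpow_neg (norm_nonneg _), hp]
    congr 2
    push_cast; ring
  have hfi : Integrable f := by
    have := (hPm.integrable_comp_emb hPe).2 hKi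
    exact this.congr (.of_forall hfK)
  have hfv : ∫ y, kernelA s A u x y = ∫ q, f q := by
    rw [← hPm.integral_comp hPe]; simp only [hfK]
  -- reflection in z
  let N : ℝ × EuclideanSpace ℝ (Fin m) → ℝ × EuclideanSpace ℝ (Fin m) := fun q => (q.1, -q.2)
  have hNm : MeasurePreserving N volume volume :=
    (MeasurePreserving.id volume).prod (Measure.measurePreserving_neg volume)
  have hNe : MeasurableEmbedding N :=
    ((Homeomorph.refl ℝ).prodCongr (Homeomorph.neg (EuclideanSpace ℝ (Fin m)))).measurableEmbedding
  have hfN : Integrable (fun q => f (N q)) := (hNm.integrable_comp_emb hNe).2 hfi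
  have hfNv : ∫ q, f (N q) = ∫ q, f q := hNm.integral_comp hNe f
  -- G1
  let G1 : ℝ × EuclideanSpace ℝ (Fin m) → ℝ := fun q => g q.1 * k q.1 q.2
  let G2 : ℝ × EuclideanSpace ℝ (Fin m) → ℝ := fun q => modM L C ‖q.2‖ * k q.1 q.2
  have hne : ∀ᵐ t : ℝ, t ≠ 0 := by simp [ae_iff]
  have hne2 : ∀ᵐ z : EuclideanSpace ℝ (Fin m), z ≠ 0 := by simp [ae_iff]
  have hkz := kernel_z m hm s a b hs0 ha hb hab
  have hkt := kernel_t m hm s a b hs0 ha hb hab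
  let h : ℝ → ℝ := fun r => g r * r ^ (-1 - 2 * s)
  have hhabs : Integrable (fun t : ℝ => h |t|) := int_abs h hint
  have hG1i : Integrable G1 := by
    have hG1m : Measurable G1 := (hgc.measurable.comp measurable_fst).mul hkm
    change Integrable G1 (volume.prod volume)
    rw [integrable_prod_iff hG1m.aestronglyMeasurable]
    constructor
    · filter_upwards [hne] with t ht
      exact (hkz t ht).1.const_mul (g t)
    · refine ((hhabs.norm).const_mul (C2 (m + 1) s * a ^ (-(2 * s)))).congr ?_
      filter_upwards [hne] with t ht
      have : ∀ z, ‖G1 (t, z)‖ = |g t| * k t z := by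
        intro z; simp only [G1, norm_mul, Real.norm_eq_abs, abs_of_nonneg (hk0 t z)]
      simp only [this]
      rw [integral_const_mul, (hkz t ht).2]
      simp only [h, norm_mul, ← hgabs, Real.norm_eq_abs]
      rw [abs_of_nonneg (show 0 ≤ |t| ^ (-1 - 2 * s) by positivity)]
      ring
  have hG1v : ∫ q, G1 q = 2 * (C2 (m + 1) s * a ^ (-(2 * s)) * ∫ r in Set.Ioi (0:ℝ), h r) := by
    change ∫ q, G1 q ∂(volume.prod volume) = _
    rw [integral_prod _ hG1i]
    have : ∀ᵐ t : ℝ, ∫ z, G1 (t, z) = (C2 (m + 1) s * a ^ (-(2 * s))) * h |t| := by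
      filter_upwards [hne] with t ht
      simp only [G1]
      rw [integral_const_mul, (hkz t ht).2]
      simp only [h, ← hgabs]
      ring
    rw [integral_congr_ae this, integral_const_mul, integral_comp_abs]
    ring
  set c : ℝ := Real.sqrt Real.pi * Real.Gamma ((((m + 1 : ℕ) : ℝ) - 1) / 2 + s) /
        Real.Gamma (((m + 1 : ℕ) : ℝ) / 2 + s) with hc
  obtain ⟨hM1, hM2⟩ := modM_int s L C hs hs1 hL hC
  have hrad : ∀ r ∈ Set.Ioi (0:ℝ), r ^ (Module.finrank ℝ (EuclideanSpace ℝ (Fin m)) - 1) •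
      (modM L C r * r ^ (-(m:ℝ) - 2 * s)) = modM L C r * r ^ (-1 - 2 * s) := by
    intro r hr
    have hr' : 0 < r := hr
    simp only [finrank_euclideanSpace, Fintype.card_fin, smul_eq_mul]
    rw [mul_left_comm, ← Real.rpow_natCast, ← Real.rpow_add hr', Nat.cast_sub hm]
    congr 2; push_cast; ring
  have hMz : Integrable (fun z : EuclideanSpace ℝ (Fin m) =>
      modM L C ‖z‖ * ‖z‖ ^ (-(m:ℝ) - 2 * s)) := by
    refine (integrable_fun_norm_addHaar volume
      (f := fun r => modM L C r * r ^ (-(m:ℝ) - 2 * s))).2 ?_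
    exact (integrableOn_congr_fun hrad measurableSet_Ioi).2 hM1
  have hMv : ∫ z : EuclideanSpace ℝ (Fin m), modM L C ‖z‖ * ‖z‖ ^ (-(m:ℝ) - 2 * s) =
      surfOmega m * ∫ r in Set.Ioi (0:ℝ), modM L C r * r ^ (-1 - 2 * s) := by
    rw [integral_fun_norm_addHaar volume (fun r => modM L C r * r ^ (-(m:ℝ) - 2 * s)),
      setIntegral_congr_fun measurableSet_Ioi hrad]
    unfold surfOmega
    rw [← surfOmega_ball m hm]
    simp [mul_assoc]
  have hG2i : Integrable G2 := by
    have hG2m : Measurable G2 :=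
      ((modM_meas L C).comp (measurable_norm.comp measurable_snd)).mul hkm
    change Integrable G2 (volume.prod volume)
    rw [integrable_prod_iff' hG2m.aestronglyMeasurable]
    constructor
    · filter_upwards [hne2] with z hz
      exact (hkt ‖z‖ (norm_pos_iff.2 hz)).1.const_mul (modM L C ‖z‖)
    · refine (hMz.const_mul (c * b ^ (-(2 * s)))).congr ?_
      filter_upwards [hne2] with z hz
      have : ∀ t, ‖G2 (t, z)‖ = modM L C ‖z‖ * k t z := by
        intro t
        rw [Real.norm_of_nonneg (mul_nonneg (modM_nonneg L C hL hC _ (norm_nonneg _)) (hk0 t z))]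
      simp only [this]
      rw [integral_const_mul, (hkt ‖z‖ (norm_pos_iff.2 hz)).2]
      ring
  have hG2v : ∫ q, G2 q = c * b ^ (-(2 * s)) *
      (surfOmega m * ∫ r in Set.Ioi (0:ℝ), modM L C r * r ^ (-1 - 2 * s)) := by
    change ∫ q, G2 q ∂(volume.prod volume) = _
    rw [integral_prod_symm _ hG2i]
    have : ∀ᵐ z : EuclideanSpace ℝ (Fin m), ∫ t, G2 (t, z) =
        (c * b ^ (-(2 * s))) * (modM L C ‖z‖ * ‖z‖ ^ (-(m:ℝ) - 2 * s)) := by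
      filter_upwards [hne2] with z hz
      simp only [G2]
      rw [integral_const_mul, (hkt ‖z‖ (norm_pos_iff.2 hz)).2]
      ring
    rw [integral_congr_ae this, integral_const_mul, hMv]
  have hpt : ∀ q, f q + f (N q) ≤ 2 * G1 q + 2 * G2 q := by
    intro q
    have h1 := delta2_le_modM L C u hLip hSC (x + q.1 • e) (W q.2)
    have h2 := delta2_le_modM L C u hLip hSC (x - q.1 • e) (W q.2)
    rw [hWn] at h1 h2
    have h3 : delta2 u x (q.1 • e + W q.2) + delta2 u x (q.1 • e + W (-q.2)) =
        delta2 u (x + q.1 • e) (W q.2) + delta2 u (x - q.1 • e) (W q.2) + 2 * g q.1 := by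
      simp only [delta2, g, map_neg]
      rw [show x + (q.1 • e + W q.2) = x + q.1 • e + W q.2 by abel,
        show x - (q.1 • e + W q.2) = x - q.1 • e - W q.2 by abel,
        show x + (q.1 • e + -W q.2) = x + q.1 • e - W q.2 by abel,
        show x - (q.1 • e + -W q.2) = x - q.1 • e + W q.2 by abel]
      ring
    have h4 : f q + f (N q) = (delta2 u x (q.1 • e + W q.2) + delta2 u x (q.1 • e + W (-q.2))) *
        k q.1 q.2 := by
      simp only [f, N, hkneg]; ring
    rw [h4, h3]
    have h5 : 2 * G1 q + 2 * G2 q = (2 * modM L C ‖q.2‖ + 2 * g q.1) * k q.1 q.2 := by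
      simp only [G1, G2]; ring
    rw [h5]
    exact mul_le_mul_of_nonneg_right (by linarith) (hk0 _ _)
  have hmono := integral_mono (hfi.add hfN) ((hG1i.const_mul 2).add (hG2i.const_mul 2)) hpt
  have hl : ∫ q, (f + fun q => f (N q)) q = 2 * ∫ q, f q := by
    rw [integral_add' hfi hfN, hfNv]; ring
  have hr : ∫ q, ((fun q => 2 * G1 q) + fun q => 2 * G2 q) q =
      2 * (∫ q, G1 q) + 2 * ∫ q, G2 q := by
    rw [integral_add' (hG1i.const_mul 2) (hG2i.const_mul 2), integral_const_mul,
      integral_const_mul]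
  have hmono2 : ∫ q, f q ≤ (∫ q, G1 q) + ∫ q, G2 q := by
    rw [hl] at hmono
    have := hmono.trans (le_of_eq hr)
    linarith
  unfold LA at hKη
  rw [hfv] at hKη
  have hfin : (1 - s) * (1 / 2 * ∫ q, f q) ≤ (1 - s) * (1 / 2 * ((∫ q, G1 q) + ∫ q, G2 q)) := by
    have : 0 ≤ 1 - s := by linarith
    gcongr
  refine hKη.trans (hfin.trans (le_of_eq ?_))
  rw [hG1v, hG2v]
  unfold C1 mu1
  rw [← hM2, ← hc, Nat.add_sub_cancel]
  simp only [h, g]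
  ring

lemma surfOmega_pos (m : ℕ) (hm : 1 ≤ m) : 0 < surfOmega m := by
  have hm0 : (0:ℝ) < m := by exact_mod_cast hm
  have hΓ := Real.Gamma_pos_of_pos (show (0:ℝ) < m / 2 by positivity)
  have := Real.pi_pos
  unfold surfOmega; positivity

lemma C1_pos (m : ℕ) (hm : 1 ≤ m) (s L C : ℝ) (hs : 1 / 2 < s) (hL : 0 < L) (hC : 0 < C) :
    0 < C1 (m + 1) s L C := by
  have hm0 : (0:ℝ) < m := by exact_mod_cast hm
  have h1 := Real.Gamma_pos_of_pos (show (0:ℝ) < (((m + 1 : ℕ) : ℝ) - 1) / 2 + s by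
    push_cast; linarith)
  have h2 := Real.Gamma_pos_of_pos (show (0:ℝ) < ((m + 1 : ℕ) : ℝ) / 2 + s by
    push_cast; linarith)
  have h3 := surfOmega_pos m hm
  have h4 : 0 < 2 * s - 1 := by linarith
  have := Real.pi_pos
  unfold C1 mu1
  rw [Nat.add_sub_cancel]
  positivity

lemma C2_pos (m : ℕ) (hm : 1 ≤ m) (s : ℝ) (hs : 1 / 2 < s) : 0 < C2 (m + 1) s := by
  have hm0 : (0:ℝ) < m := by exact_mod_cast hm
  have h1 := Real.Gamma_pos_of_pos (show (0:ℝ) < (((m + 1 : ℕ) : ℝ) - 1) / 2 by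
    push_cast; linarith)
  have h2 := Real.Gamma_pos_of_pos (show (0:ℝ) < ((m + 1 : ℕ) : ℝ) / 2 + s by
    push_cast; linarith)
  have h5 := Real.Gamma_pos_of_pos (show (0:ℝ) < s + 1 / 2 by linarith)
  have h3 := surfOmega_pos m hm
  unfold C2
  rw [Nat.add_sub_cancel]
  positivity

lemma mu0_pos (m : ℕ) (hm : 1 ≤ m) (s L C η₀ : ℝ) (hs : 1 / 2 < s) (hL : 0 < L) (hC : 0 < C)
    (hη : 0 < η₀) : 0 < mu0 (m + 1) s L C η₀ := by
  have h1 := C1_pos m hm s L C hs hL hC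
  have h2 := C2_pos m hm s hs
  unfold mu0; positivity

lemma dirLower (m : ℕ) (hm : 1 ≤ m) (s L C η₀ : ℝ)
    (hs : 1 / 2 < s) (hs1 : s < 1) (hL : 0 < L) (hC : 0 < C) (hη : 0 < η₀)
    (u : EuclideanSpace ℝ (Fin (m + 1)) → ℝ)
    (hLip : ∀ a b : EuclideanSpace ℝ (Fin (m + 1)), |u a - u b| ≤ L * ‖a - b‖)
    (hSC : ∀ a b : EuclideanSpace ℝ (Fin (m + 1)), delta2 u a b ≤ C * ‖b‖ ^ 2)
    (hcont : Continuous u)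
    (x : EuclideanSpace ℝ (Fin (m + 1)))
    (hEll : ∀ A : Matrix (Fin (m + 1)) (Fin (m + 1)) ℝ, A.PosDef → A.det = 1 →
      Integrable (fun y => kernelA s A u x y) ∧ η₀ ≤ (1 - s) * LA s A u x)
    (e : EuclideanSpace ℝ (Fin (m + 1))) (he : ‖e‖ = 1)
    (hint : IntegrableOn (fun r : ℝ => delta2 u x (r • e) * r ^ (-1 - 2 * s)) (Set.Ioi 0)) :
    mu0 (m + 1) s L C η₀ ≤
      (1 - s) * ∫ r in Set.Ioi (0:ℝ), delta2 u x (r • e) * r ^ (-1 - 2 * s) := by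
  have h1 := C1_pos m hm s L C hs hL hC
  have h2 := C2_pos m hm s hs
  set c1 := C1 (m + 1) s L C with hc1
  set c2 := C2 (m + 1) s with hc2
  have hs0 : 0 < s := by linarith
  have hq : 0 < η₀ / 2 / c1 := by positivity
  set b : ℝ := (η₀ / 2 / c1) ^ (-(1 / (2 * s))) with hb
  have hb0 : 0 < b := by positivity
  have hbs : b ^ (-(2 * s)) = η₀ / 2 / c1 := by
    rw [hb, ← Real.rpow_mul hq.le]
    have : -(1 / (2 * s)) * -(2 * s) = 1 := by field_simp
    rw [this, Real.rpow_one]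
  have ha0 : 0 < (b ^ m)⁻¹ := by positivity
  have has : ((b ^ m)⁻¹) ^ (-(2 * s)) = ((η₀ / 2 / c1) ^ m)⁻¹ := by
    rw [Real.inv_rpow (by positivity), ← hbs, ← Real.rpow_natCast, ← Real.rpow_natCast,
      ← Real.rpow_mul hb0.le, ← Real.rpow_mul hb0.le, mul_comm]
  have key := dirIneq m hm s L C η₀ hs hs1 hL hC u hLip hSC hcont x hEll e he hint (b ^ m)⁻¹ b
    ha0 hb0 (inv_mul_cancel₀ (by positivity))
  rw [hbs, has, ← hc1, ← hc2] at key
  generalize (1 - s) * ∫ r in Set.Ioi (0:ℝ), delta2 u x (r • e) * r ^ (-1 - 2 * s) = Φ at key ⊢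
  have h3 : c1 * (η₀ / 2 / c1) = η₀ / 2 := by field_simp
  rw [h3] at key
  have h4 : η₀ / 2 ≤ c2 * ((η₀ / 2 / c1) ^ m)⁻¹ * Φ := by linarith
  have h5 : mu0 (m + 1) s L C η₀ = (c1 ^ m)⁻¹ * c2⁻¹ * (η₀ / 2) ^ (m + 1) := by
    unfold mu0
    rw [← hc1, ← hc2, Real.rpow_natCast]
    congr 2
    rw [show (1 - ((m + 1 : ℕ) : ℝ)) = -(m:ℝ) by push_cast; ring, Real.rpow_neg h1.le,
      Real.rpow_natCast]
  rw [h5]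
  have h6 : (c1 ^ m)⁻¹ * c2⁻¹ * (η₀ / 2) ^ (m + 1) = (η₀ / 2) / (c2 * ((η₀ / 2 / c1) ^ m)⁻¹) := by
    rw [div_pow (η₀ / 2) c1, pow_succ (η₀ / 2)]
    have : (η₀ / 2) ^ m ≠ 0 := by positivity
    generalize (η₀ / 2) ^ m = Q at *
    field_simp
  rw [h6, div_le_iff₀ (by positivity), mul_comm]
  exact h4

theorem stmt2 (n : ℕ) (hn : 2 ≤ n) (s L C η₀ : ℝ)
    (hs : 1 / 2 < s) (hs1 : s < 1) (hL : 0 < L) (hC : 0 < C) (hη : 0 < η₀)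
    (u : EuclideanSpace ℝ (Fin n) → ℝ)
    (hLip : ∀ a b : EuclideanSpace ℝ (Fin n), |u a - u b| ≤ L * ‖a - b‖)
    (hSC : ∀ a b : EuclideanSpace ℝ (Fin n), delta2 u a b ≤ C * ‖b‖ ^ 2)
    (x : EuclideanSpace ℝ (Fin n))
    (hEll : ∀ A : Matrix (Fin n) (Fin n) ℝ, A.PosDef → A.det = 1 →
      Integrable (fun y => kernelA s A u x y) ∧ η₀ ≤ (1 - s) * LA s A u x)
    (ε : Fin n → ℝ) (hε : ∀ j, 0 < ε j) (hprod : ∏ j, ε j = 1) :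
    mu0 n s L C η₀ * surfOmega n / (2 * n) * ∑ j, ε j ^ (-(2 * s)) ≤
      (1 - s) * (1 / 2 * ∫ y : EuclideanSpace ℝ (Fin n),
        delta2 u x y / (∑ j, ε j ^ 2 * y j ^ 2) ^ (((n : ℝ) + 2 * s) / 2)) := by
  obtain ⟨m, rfl⟩ : ∃ m, n = m + 1 := ⟨n - 1, by omega⟩
  have hm : 1 ≤ m := by omega
  have hs0 : 0 < s := by linarith
  have hcont : Continuous u := by
    refine (LipschitzWith.of_dist_le_mul (K := L.toNNReal) fun a b => ?_).continuous
    rw [Real.dist_eq, dist_eq_norm, Real.coe_toNNReal _ hL.le]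
    exact hLip a b
  set p : ℝ := (((m + 1 : ℕ) : ℝ) + 2 * s) / 2 with hp
  let q : EuclideanSpace ℝ (Fin (m + 1)) → ℝ := fun y => ∑ j, ε j ^ 2 * y j ^ 2
  let f : EuclideanSpace ℝ (Fin (m + 1)) → ℝ := fun y => delta2 u x y / q y ^ p
  have hq0 : ∀ y, 0 ≤ q y := fun y => Finset.sum_nonneg fun j _ => by positivity
  have hqpos : ∀ y, y ≠ 0 → 0 < q y := by
    intro y hy
    obtain ⟨j, hj⟩ : ∃ j, y j ≠ 0 := by
      by_contra hcon
      push Not at hcon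
      exact hy (PiLp.ext hcon)
    refine Finset.sum_pos' (fun j _ => by positivity) ⟨j, Finset.mem_univ j, ?_⟩
    have := hε j
    positivity
  have hqc : Continuous q := by simp only [q]; fun_prop
  have hqs : ∀ (r : ℝ) y, q (r • y) = r ^ 2 * q y := by
    intro r y
    simp only [q, Finset.mul_sum]
    refine Finset.sum_congr rfl fun j _ => ?_
    simp; ring
  -- the matrix
  have hdet : (Matrix.diagonal fun j => (ε j)⁻¹).det = 1 := by
    rw [Matrix.det_diagonal, Finset.prod_inv_distrib, hprod, inv_one]
  have hpd : (Matrix.diagonal fun j => (ε j)⁻¹).PosDef :=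
    Matrix.PosDef.diagonal fun j => inv_pos.2 (hε j)
  have hinv : (Matrix.diagonal fun j => (ε j)⁻¹)⁻¹ = Matrix.diagonal ε := by
    apply Matrix.inv_eq_right_inv
    rw [Matrix.diagonal_mul_diagonal, ← Matrix.diagonal_one]
    congr 1; funext j
    exact inv_mul_cancel₀ (hε j).ne'
  have hker : ∀ y, kernelA s (Matrix.diagonal fun j => (ε j)⁻¹) u x y = f y := by
    intro y
    simp only [kernelA, f, hinv]
    congr 1
    have h1 : ‖(EuclideanSpace.equiv (Fin (m + 1)) ℝ).symm ((Matrix.diagonal ε).mulVec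
        (EuclideanSpace.equiv (Fin (m + 1)) ℝ y))‖ ^ 2 = q y := by
      rw [EuclideanSpace.norm_sq_eq]
      refine Finset.sum_congr rfl fun j _ => ?_
      simp [Matrix.mulVec_diagonal, mul_pow]
    rw [← h1, ← Real.rpow_natCast, ← Real.rpow_mul (norm_nonneg _), hp]
    congr 1
    push_cast; ring
  have hfi : Integrable f := (hEll _ hpd hdet).1.congr (.of_forall hker)
  obtain ⟨P1, P2, P3⟩ := polarInt (n := m + 1)  (by simp) f hfi
  have hrad : ∀ (y : EuclideanSpace ℝ (Fin (m + 1))), ∀ r ∈ Set.Ioi (0:ℝ), r ^ (m + 1 - 1) * f (r • y) =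
      (delta2 u x (r • y) * r ^ (-1 - 2 * s)) * q y ^ (-p) := by
    intro y r hr
    have hr' : 0 < r := hr
    simp only [f]
    rw [hqs, Real.mul_rpow (by positivity) (hq0 y), Real.rpow_neg (hq0 y), Nat.add_sub_cancel,
      ← Real.rpow_natCast r 2, ← Real.rpow_mul hr'.le,
      show -1 - 2 * s = (m:ℝ) - ((2:ℕ):ℝ) * p by rw [hp]; push_cast; ring,
      Real.rpow_sub hr', Real.rpow_natCast]
    field_simp
  have hσq : ∀ σ : Metric.sphere (0 : EuclideanSpace ℝ (Fin (m + 1))) 1, 0 < q σ.1 := by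
    intro σ
    apply hqpos
    exact ne_zero_of_mem_unit_sphere σ
  have hmain : ∀ᵐ σ : Metric.sphere (0 : EuclideanSpace ℝ (Fin (m + 1))) 1 ∂(volume : Measure (EuclideanSpace ℝ (Fin (m + 1)))).toSphere,
      mu0 (m + 1) s L C η₀ * q σ.1 ^ (-p) ≤
        (1 - s) * ∫ r in Set.Ioi (0:ℝ), r ^ (m + 1 - 1) * f (r • (σ : EuclideanSpace ℝ (Fin (m + 1)))) := by
    filter_upwards [P1] with σ hσ
    have hpos : 0 < q σ.1 ^ (-p) := Real.rpow_pos_of_pos (hσq σ) _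
    have h1 := (integrableOn_congr_fun (hrad σ.1) measurableSet_Ioi).1 hσ
    have h2 : IntegrableOn (fun r : ℝ => delta2 u x (r • σ.1) * r ^ (-1 - 2 * s)) (Set.Ioi 0) := by
      have := h1.mul_const (q σ.1 ^ (-p))⁻¹
      refine this.congr (.of_forall fun r => ?_)
      exact mul_inv_cancel_right₀ hpos.ne' _
    have h3 := dirLower m hm s L C η₀ hs hs1 hL hC hη u hLip hSC hcont x hEll σ.1
      (norm_eq_of_mem_sphere σ) h2
    rw [setIntegral_congr_fun measurableSet_Ioi (hrad σ.1), integral_mul_const, ← mul_assoc]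
    exact mul_le_mul_of_nonneg_right h3 hpos.le
  have hqi : Integrable (fun σ : Metric.sphere (0 : EuclideanSpace ℝ (Fin (m + 1))) 1 => q σ.1 ^ (-p))
      (volume : Measure (EuclideanSpace ℝ (Fin (m + 1)))).toSphere := by
    have hc : Continuous (fun σ : Metric.sphere (0 : EuclideanSpace ℝ (Fin (m + 1))) 1 => q σ.1 ^ (-p)) :=
      (hqc.comp continuous_subtype_val).rpow_const fun σ => Or.inl (hσq σ).ne'
    exact hc.integrable_of_hasCompactSupport (HasCompactSupport.of_compactSpace _)
  have hmono := integral_mono_ae (hqi.const_mul (mu0 (m + 1) s L C η₀)) (P2.const_mul (1 - s)) hmain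
  rw [integral_const_mul, integral_const_mul, ← P3] at hmono
  have hlow := sphereLower (n := m + 1) (by omega) s hs0 hs1 ε hε hprod
  have hμ := mu0_pos m hm s L C η₀ hs hL hC hη
  have h7 := (mul_le_mul_of_nonneg_left hlow hμ.le).trans hmono
  change _ ≤ (1 - s) * (1 / 2 * ∫ y, f y)
  have h8 : mu0 (m + 1) s L C η₀ * surfOmega (m + 1) / (2 * ((m + 1 : ℕ) : ℝ)) *
      ∑ j, ε j ^ (-(2 * s)) = 1 / 2 * (mu0 (m + 1) s L C η₀ *
      (2 * Real.pi ^ (((m + 1 : ℕ) : ℝ) / 2) / Real.Gamma (((m + 1 : ℕ) : ℝ) / 2) /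
        ((m + 1 : ℕ) : ℝ) * ∑ j, ε j ^ (-(2 * s)))) := by
    change mu0 (m + 1) s L C η₀ * (2 * Real.pi ^ (((m + 1 : ℕ) : ℝ) / 2) /
      Real.Gamma (((m + 1 : ℕ) : ℝ) / 2)) / (2 * ((m + 1 : ℕ) : ℝ)) * _ = _
    rw [mul_comm 2 ((m + 1 : ℕ) : ℝ)]
    generalize 2 * Real.pi ^ (((m + 1 : ℕ) : ℝ) / 2) / Real.Gamma (((m + 1 : ℕ) : ℝ) / 2) = w
    ring
  rw [h8]
  linarith
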